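/- Let n ≥ 4 and let φ : ℝⁿ → ℝⁿ be a continuous, non-degenerate coherency preserver for the form q(x₁,…,xₙ) = xₙ² − (x₁² + ⋯ + x_{n−1}²). Assume φ(0) = 0, the induced map φ_0 : 𝒬 → 𝒬 is nonconstant, and 0 is generic (the preimage φ⁻¹({0}) has empty interior). Then φ_0 is injective: for all p, p′ ∈ 𝒬 with p ≠ p′, one has φ_0(p) ≠ φ_0(p′). -/

import Mathlib

/-!
Write `q` for the form and `b` for its polarization. A vector `x` with `b(x,p) ≠ 0` is coherent with
exactly one point `τ(x,p)·p`, `τ(x,p) = q(x) / (2 b(x,p))`, of the line `ℝp`. If `q(φ x) ≠ 0` then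
`φ(τ(x,p)·p) = c·ψ(p)` with `c ≠ 0` determined by `φ x` and `ψ(p)`.

*Some `x` with `q(x) > 0` satisfies `q(φ x) ≠ 0`.* Then no line `ℝp` collapses, so `ψ` is the unique
induced map. Suppose `ψ(p) = ψ(p') = P` with `p ≠ p'`. As `τ(·,p)` and `τ(·,p')` can be varied
independently, `c` is locally constant, so that `φ` maps a neighbourhood of each such `x` into
the cone with apex `cP` (`local_cone`). Choose `p₁` with `ψ(p₁) ≠ P` and let `z = τ(x,p₁)·p₁`. The
image of the coherent line through `x` and `z` lies on a coherent line that meets the cone of `cP` in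
one point only, so `φ` is locally constant along the segment from `x` to `z`; hence
`φ z = φ x`, which is absurd since `q(φ z) = 0` (`injective_of_timelike`).

*All `x` with `q(x) > 0` satisfy `q(φ x) = 0`.* Points `t·p`, `t'·p'` with `t t' > 0` outside the
zero set of `φ` force `ψ(p) = ψ(p')`: near the vector `t·p + t'·p'`, which has positive `q`,
genericity gives `x` with `φ x ≠ 0`, and `φ x` must be proportional to both `ψ(p)` and `ψ(p')`
(`same_sign_eq`). By non-degeneracy there is `y` with `q(φ y) ≠ 0`; it has `q(y) < 0`, so
some `r ∈ 𝒬` is orthogonal to `y`. Perturbing `y` to make `τ(y,p)` and `τ(y,r)` of the same sign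
gives `ψ(p) = ψ(r)` for every `p`, so `ψ` is constant, contrary to assumption
(`constant_of_not_timelike`).
-/

/-- The standard Minkowski quadratic form
`q(x₁,…,xₙ) = xₙ² − (x₁² + ⋯ + x_{n−1}²)` on `ℝⁿ`. -/
noncomputable def mq (n : ℕ) (x : Fin n → ℝ) : ℝ :=
  ∑ i : Fin n, (if (i : ℕ) = n - 1 then (1 : ℝ) else -1) * x i ^ 2

/-- The set `𝒬 = {(x₁,…,x_{n−1},1) : x₁² + ⋯ + x_{n−1}² = 1}` in `ℝⁿ`. -/
def QSet (n : ℕ) : Set (Fin n → ℝ) :=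
  {p | (∀ i : Fin n, (i : ℕ) = n - 1 → p i = 1) ∧
       (∑ i : Fin n, if (i : ℕ) = n - 1 then 0 else p i ^ 2) = 1}

/-- `ψ` restricted to `𝒬` is the map `φ_a` induced by `φ` at the point `a`:
it sends `𝒬` into `𝒬` and `φ` maps the coherent line `a + ℝ·p` into the
coherent line `φ(a) + ℝ·ψ(p)`. -/
def IsInducedMap (n : ℕ) (φ : (Fin n → ℝ) → (Fin n → ℝ)) (a : Fin n → ℝ)
    (ψ : (Fin n → ℝ) → (Fin n → ℝ)) : Prop :=
  ∀ p ∈ QSet n, ψ p ∈ QSet n ∧ ∀ t : ℝ, ∃ s : ℝ, φ (a + t • p) = φ a + s • ψ p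

/-! ### The polar form and null vectors -/

/-- The symmetric bilinear form with `mb n x x = mq n x`. -/
noncomputable def mb (n : ℕ) (x y : Fin n → ℝ) : ℝ :=
  ∑ i : Fin n, (if (i : ℕ) = n - 1 then (1 : ℝ) else -1) * (x i * y i)

lemma mq_eq (n : ℕ) (x : Fin n → ℝ) : mq n x = mb n x x := by
  simp [mq, mb, sq]

lemma mb_comm (n : ℕ) (x y : Fin n → ℝ) : mb n x y = mb n y x := by
  simp [mb, mul_comm]

lemma mb_add_left (n : ℕ) (x y z : Fin n → ℝ) : mb n (x + y) z = mb n x z + mb n y z := by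
  simp only [mb, ← Finset.sum_add_distrib, Pi.add_apply]
  exact Finset.sum_congr rfl fun i _ => by ring

lemma mb_smul_left (n : ℕ) (c : ℝ) (x z : Fin n → ℝ) : mb n (c • x) z = c * mb n x z := by
  simp only [mb, Finset.mul_sum, Pi.smul_apply, smul_eq_mul]
  exact Finset.sum_congr rfl fun i _ => by ring

lemma mb_sub_left (n : ℕ) (x y z : Fin n → ℝ) : mb n (x - y) z = mb n x z - mb n y z := by
  simp only [mb, ← Finset.sum_sub_distrib, Pi.sub_apply]
  exact Finset.sum_congr rfl fun i _ => by ring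

lemma mb_add_right (n : ℕ) (x y z : Fin n → ℝ) : mb n z (x + y) = mb n z x + mb n z y := by
  rw [mb_comm, mb_add_left, mb_comm n x, mb_comm n y]

lemma mb_sub_right (n : ℕ) (x y z : Fin n → ℝ) : mb n z (x - y) = mb n z x - mb n z y := by
  rw [mb_comm, mb_sub_left, mb_comm n x, mb_comm n y]

lemma mb_smul_right (n : ℕ) (c : ℝ) (x z : Fin n → ℝ) : mb n z (c • x) = c * mb n z x := by
  rw [mb_comm, mb_smul_left, mb_comm n x]

lemma continuous_mb (n : ℕ) : Continuous fun z : (Fin n → ℝ) × (Fin n → ℝ) => mb n z.1 z.2 := by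
  unfold mb
  fun_prop

@[fun_prop]
lemma Continuous.mb' {X : Type*} [TopologicalSpace X] {n : ℕ} {f g : X → Fin n → ℝ}
    (hf : Continuous f) (hg : Continuous g) : Continuous fun x => mb n (f x) (g x) :=
  (continuous_mb n).comp (hf.prodMk hg)

lemma mb_self_nonpos {n : ℕ} {l : Fin n} (hl : (l : ℕ) = n - 1) {w : Fin n → ℝ} (hw : w l = 0) :
    mb n w w ≤ 0 := by
  unfold mb
  refine Finset.sum_nonpos fun i _ => ?_
  split_ifs with h
  · have : i = l := Fin.ext (h.trans hl.symm)
    simp [this, hw]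
  · nlinarith [mul_self_nonneg (w i)]

lemma eq_zero_of_null {n : ℕ} {l : Fin n} (hl : (l : ℕ) = n - 1) {w : Fin n → ℝ} (hw : w l = 0)
    (h : mb n w w = 0) : w = 0 := by
  unfold mb at h
  rw [Finset.sum_eq_zero_iff_of_nonpos] at h
  · funext i
    have hi := h i (Finset.mem_univ i)
    split_ifs at hi with h'
    · have : i = l := Fin.ext (h'.trans hl.symm)
      simp [this, hw]
    · simpa using hi
  · intro i _
    split_ifs with h
    · have : i = l := Fin.ext (h.trans hl.symm)
      simp [this, hw]
    · nlinarith [mul_self_nonneg (w i)]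

lemma mem_QSet_iff {n : ℕ} {l : Fin n} (hl : (l : ℕ) = n - 1) (p : Fin n → ℝ) :
    p ∈ QSet n ↔ p l = 1 ∧ mb n p p = 0 := by
  have key : mb n p p
      = p l ^ 2 - ∑ i : Fin n, if (i : ℕ) = n - 1 then 0 else p i ^ 2 := by
    have : p l ^ 2 = ∑ i : Fin n, if (i : ℕ) = n - 1 then p i ^ 2 else 0 := by
      have h : ∀ i : Fin n, ((i : ℕ) = n - 1) ↔ (i = l) := fun i => by rw [← hl, Fin.ext_iff]
      simp [h]
    rw [this, ← Finset.sum_sub_distrib, mb]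
    refine Finset.sum_congr rfl fun i _ => ?_
    split_ifs <;> ring
  constructor
  · rintro ⟨h1, h2⟩
    refine ⟨h1 l hl, ?_⟩
    rw [key, h1 l hl, h2]; norm_num
  · rintro ⟨h1, h2⟩
    refine ⟨fun i hi => ?_, ?_⟩
    · have : i = l := Fin.ext (hi.trans hl.symm)
      rw [this, h1]
    · rw [key, h1] at h2
      linarith

lemma mb_pos_of_ne {n : ℕ} {l : Fin n} (hl : (l : ℕ) = n - 1) {p p' : Fin n → ℝ}
    (hp : p ∈ QSet n) (hp' : p' ∈ QSet n) (hne : p ≠ p') : 0 < mb n p p' := by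
  rw [mem_QSet_iff hl] at hp hp'
  have hw : (p - p') l = 0 := by simp [hp.1, hp'.1]
  have e : mb n (p - p') (p - p') = -2 * mb n p p' := by
    simp only [mb_sub_left, mb_sub_right, hp.2, hp'.2, mb_comm n p' p]; ring
  have h1 := mb_self_nonpos hl hw
  have h2 : mb n (p - p') (p - p') ≠ 0 := fun h => hne (sub_eq_zero.1 (eq_zero_of_null hl hw h))
  rw [e] at h1 h2
  rcases lt_or_eq_of_le h1 with h | h
  · linarith
  · exact absurd h h2

lemma mb_ne_zero_of_timelike {n : ℕ} {l : Fin n} (hl : (l : ℕ) = n - 1) {x p : Fin n → ℝ}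
    (hx : 0 < mb n x x) (hp : p ∈ QSet n) : mb n x p ≠ 0 := by
  rw [mem_QSet_iff hl] at hp
  intro h
  have hw : (x - x l • p) l = 0 := by simp [hp.1]
  have h1 := mb_self_nonpos hl hw
  simp only [mb_sub_left, mb_sub_right, mb_smul_left, mb_smul_right, hp.2, mb_comm n p x, h] at h1
  linarith

lemma exists_smul_of_null {n : ℕ} {l : Fin n} (hl : (l : ℕ) = n - 1) {u v : Fin n → ℝ}
    (hu : mb n u u = 0) (hv : mb n v v = 0) (huv : mb n u v = 0) (h0 : u ≠ 0) :
    ∃ μ : ℝ, v = μ • u := by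
  have hul : u l ≠ 0 := fun h => h0 (eq_zero_of_null hl h hu)
  refine ⟨v l / u l, sub_eq_zero.1 (eq_zero_of_null hl ?_ ?_)⟩
  · simp [hul]
  · simp only [mb_sub_left, mb_sub_right, mb_smul_left, mb_smul_right, hu, hv, mb_comm n v u, huv]
    ring

/-- The parameter `t` for which `t • p` is coherent with `x`; it is only meaningful when
`mb n x p ≠ 0`. -/
noncomputable def tau (n : ℕ) (x p : Fin n → ℝ) : ℝ := mb n x x / (2 * mb n x p)

lemma tau_null {n : ℕ} {l : Fin n} (hl : (l : ℕ) = n - 1) {x p : Fin n → ℝ} (hp : p ∈ QSet n)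
    (hx : mb n x p ≠ 0) : mb n (x - tau n x p • p) (x - tau n x p • p) = 0 := by
  rw [mem_QSet_iff hl] at hp
  simp only [mb_sub_left, mb_sub_right, mb_smul_left, mb_smul_right, hp.2, mb_comm n p x, tau]
  field_simp
  ring

lemma continuousAt_tau {n : ℕ} {x p : Fin n → ℝ} (hx : mb n x p ≠ 0) :
    ContinuousAt (fun x => tau n x p) x := by
  unfold tau
  refine ContinuousAt.div ?_ ?_ (by simpa using hx)
  · exact Continuous.continuousAt (by fun_prop)
  · exact Continuous.continuousAt (by fun_prop)

/-! ### Images of coherent points -/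

/-- The scalar `c` for which `y` lies on the cone with apex `c • P` is unique if `y` is
not null. -/
lemma apex_unique {n : ℕ} {y P : Fin n → ℝ} {c d : ℝ} (hP : mb n P P = 0) (hy : mb n y y ≠ 0)
    (hc : mb n (y - c • P) (y - c • P) = 0) (hd : mb n (y - d • P) (y - d • P) = 0) : c = d := by
  simp only [mb_sub_left, mb_sub_right, mb_smul_left, mb_smul_right, hP, mb_comm n P y] at hc hd
  have hb : mb n y P ≠ 0 := by
    intro h; rw [h] at hc; apply hy; linarith
  have : (c - d) * mb n y P = 0 := by linarith
  rcases mul_eq_zero.1 this with h | h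
  · linarith
  · exact absurd h hb

section
variable {n : ℕ} {l : Fin n} {φ ψ : (Fin n → ℝ) → (Fin n → ℝ)}

lemma induced_zero (h0 : φ 0 = 0) (hψ : IsInducedMap n φ 0 ψ) {p : Fin n → ℝ} (hp : p ∈ QSet n)
    (t : ℝ) : ∃ s : ℝ, φ (t • p) = s • ψ p := by
  obtain ⟨s, hs⟩ := (hψ p hp).2 t
  exact ⟨s, by simpa [h0] using hs⟩

/-- If `x` is coherent with a point of `ℝp` and `φ x` is not null, then `ℝp` does not collapse. -/
lemma exists_coeff (hl : (l : ℕ) = n - 1)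
    (hpres : ∀ a b, mb n (b - a) (b - a) = 0 → mb n (φ b - φ a) (φ b - φ a) = 0)
    (h0 : φ 0 = 0) (hψ : IsInducedMap n φ 0 ψ) {x p : Fin n → ℝ} (hp : p ∈ QSet n)
    (hx : mb n x p ≠ 0) (hφ : mb n (φ x) (φ x) ≠ 0) :
    ∃ c : ℝ, c ≠ 0 ∧ φ (tau n x p • p) = c • ψ p ∧
      mb n (φ x - c • ψ p) (φ x - c • ψ p) = 0 := by
  obtain ⟨c, hc⟩ := induced_zero h0 hψ hp (tau n x p)
  have h := hpres _ _ (tau_null hl hp hx)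
  rw [hc] at h
  refine ⟨c, ?_, hc, h⟩
  rintro rfl
  apply hφ
  simpa using h

/-- If `ψ` identifies `p` and `p'`, then the apex of the cone through `φ x` on the line
`ℝ·ψ(p)` does not change under small perturbations of `x`. -/
lemma local_cone (hl : (l : ℕ) = n - 1) (hcont : Continuous φ)
    (hpres : ∀ a b, mb n (b - a) (b - a) = 0 → mb n (φ b - φ a) (φ b - φ a) = 0)
    (h0 : φ 0 = 0) (hψ : IsInducedMap n φ 0 ψ) {p p' : Fin n → ℝ} (hp : p ∈ QSet n)
    (hp' : p' ∈ QSet n) (hne : p ≠ p') (heq : ψ p = ψ p') {x₀ : Fin n → ℝ}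
    (hx₀ : 0 < mb n x₀ x₀) (hφ₀ : mb n (φ x₀) (φ x₀) ≠ 0) :
    ∃ c : ℝ, c ≠ 0 ∧ ∀ᶠ x in nhds x₀, mb n (φ x - c • ψ p) (φ x - c • ψ p) = 0 := by
  have hpp : mb n p p' ≠ 0 := (mb_pos_of_ne hl hp hp' hne).ne'
  have hPP : mb n (ψ p) (ψ p) = 0 := ((mem_QSet_iff hl _).1 (hψ p hp).1).2
  have hbp : mb n p p = 0 := ((mem_QSet_iff hl _).1 hp).2
  have hbp' : mb n p' p' = 0 := ((mem_QSet_iff hl _).1 hp').2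
  obtain ⟨c, hc0, hc, hcn⟩ := exists_coeff hl hpres h0 hψ hp
    (mb_ne_zero_of_timelike hl hx₀ hp) hφ₀
  refine ⟨c, hc0, ?_⟩
  -- In the chart given by the inversion `x ↦ x / q(x)`, the number `τ(x, p)` depends only on
  -- `b(·, p)`, so moving in the direction `p'` changes `τ(·, p)` but not `τ(·, p')`.
  let inv : (Fin n → ℝ) → (Fin n → ℝ) := fun x => (mb n x x)⁻¹ • x
  let w : (Fin n → ℝ) → (Fin n → ℝ) := fun x =>
    inv x₀ + ((mb n (inv x) p - mb n (inv x₀) p) / mb n p p') • p'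
  let y : (Fin n → ℝ) → (Fin n → ℝ) := fun x => inv (w x)
  have hinv : ∀ x, mb n x x ≠ 0 → ContinuousAt inv x := fun x hx => by
    have hc : Continuous fun x : Fin n → ℝ => mb n x x := by fun_prop
    exact (hc.continuousAt.inv₀ hx).smul continuousAt_id
  have hw0 : w x₀ = inv x₀ := by simp [w]
  have hq0 : mb n (inv x₀) (inv x₀) = (mb n x₀ x₀)⁻¹ := by
    simp only [inv, mb_smul_left, mb_smul_right]
    field_simp
  have hy0 : y x₀ = x₀ := by
    have e : (mb n (inv x₀) (inv x₀))⁻¹ • inv x₀ = x₀ := by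
      rw [hq0, inv_inv]
      simp only [inv]
      rw [smul_smul, mul_inv_cancel₀ hx₀.ne', one_smul]
    simpa only [y, hw0] using e
  have hwc : ContinuousAt w x₀ := by
    have h1 : ContinuousAt (fun x => mb n (inv x) p) x₀ :=
      ContinuousAt.comp (g := fun z => mb n z p)
        (Continuous.continuousAt (by fun_prop)) (hinv x₀ hx₀.ne')
    exact continuousAt_const.add
      (((h1.sub continuousAt_const).div_const _).smul continuousAt_const)
  have hyc : ContinuousAt y x₀ := by
    refine ContinuousAt.comp (g := inv) ?_ hwc
    rw [hw0]
    exact hinv _ (by rw [hq0]; exact inv_ne_zero hx₀.ne')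
  have o1 : IsOpen {x | 0 < mb n x x} := isOpen_lt (by fun_prop) (by fun_prop)
  have o2 : IsOpen {x | mb n (φ x) (φ x) ≠ 0} := isOpen_ne_fun (by fun_prop) (by fun_prop)
  have e1 := o1.mem_nhds hx₀
  have e2 := o2.mem_nhds hφ₀
  have e3 := hyc.eventually (o1.mem_nhds (by simpa [hy0] using hx₀))
  have e4 := hyc.eventually (o2.mem_nhds (by simpa [hy0] using hφ₀))
  -- `τ` read in the inverted chart
  have tau_inv : ∀ z r, mb n z z ≠ 0 → tau n (inv z) r = 1 / (2 * mb n z r) := by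
    intro z r hz
    by_cases hzr : mb n z r = 0
    · simp [tau, inv, mb_smul_left, mb_smul_right, hzr]
    · simp only [tau, inv, mb_smul_left, mb_smul_right]
      field_simp
  have inv_tau : ∀ z r, mb n z z ≠ 0 → tau n z r = 1 / (2 * mb n (inv z) r) := by
    intro z r hz
    by_cases hzr : mb n z r = 0
    · simp [tau, inv, mb_smul_left, hzr]
    · simp only [tau, inv, mb_smul_left]
      field_simp
  filter_upwards [e1, e2, e3, e4] with x hx hφx hyx hφy
  have hwx : mb n (w x) (w x) ≠ 0 := by
    intro h
    have : y x = 0 := by simp [y, inv, h]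
    rw [this] at hyx
    simp [mb] at hyx
  have t1 : tau n (y x) p = tau n x p := by
    rw [tau_inv _ _ hwx, inv_tau x p hx.ne']
    congr 2
    simp only [w, mb_add_left, mb_smul_left, mb_comm n p' p]
    field_simp
    ring
  have t2 : tau n (y x) p' = tau n x₀ p' := by
    rw [tau_inv _ _ hwx, inv_tau x₀ p' hx₀.ne']
    congr 2
    simp only [w, mb_add_left, mb_smul_left, hbp']
    ring
  obtain ⟨c1, -, hc1, hc1n⟩ := exists_coeff hl hpres h0 hψ hp'
    (mb_ne_zero_of_timelike hl hx₀ hp') hφ₀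
  obtain ⟨c2, -, hc2, hc2n⟩ := exists_coeff hl hpres h0 hψ hp
    (mb_ne_zero_of_timelike hl hyx hp) hφy
  have hyp' := hpres _ _ (tau_null hl hp' (mb_ne_zero_of_timelike hl hyx hp'))
  have hxp := hpres _ _ (tau_null hl hp (mb_ne_zero_of_timelike hl hx hp))
  rw [t2, hc1, ← heq] at hyp'
  rw [← heq] at hc1n
  have E1 : c = c1 := apex_unique hPP hφ₀ hcn hc1n
  have E2 : c1 = c2 := apex_unique hPP hφy hyp' hc2n
  rw [← t1, hc2, ← E2, ← E1] at hxp
  exact hxp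

lemma injective_of_timelike (hl : (l : ℕ) = n - 1) (hcont : Continuous φ)
    (hpres : ∀ a b, mb n (b - a) (b - a) = 0 → mb n (φ b - φ a) (φ b - φ a) = 0)
    (h0 : φ 0 = 0) (hψ : IsInducedMap n φ 0 ψ) {x₀ : Fin n → ℝ}
    (hx₀ : 0 < mb n x₀ x₀) (hφ₀ : mb n (φ x₀) (φ x₀) ≠ 0)
    {p p' p₁ : Fin n → ℝ} (hp : p ∈ QSet n)
    (hp' : p' ∈ QSet n) (hp₁ : p₁ ∈ QSet n) (hne : p ≠ p') (h₁ : ψ p ≠ ψ p₁) : ψ p ≠ ψ p' := by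
  intro heq
  obtain ⟨f, hf0, hf, -⟩ := exists_coeff hl hpres h0 hψ hp₁
    (mb_ne_zero_of_timelike hl hx₀ hp₁) hφ₀
  have hzn := tau_null hl hp₁ (mb_ne_zero_of_timelike hl hx₀ hp₁)
  have hp₁' := ((mem_QSet_iff hl _).1 hp₁).2
  have hP := ((mem_QSet_iff hl _).1 (hψ p hp).1).2
  have hP₁ := ((mem_QSet_iff hl _).1 (hψ p₁ hp₁).1).2
  have hPP₁ := (mb_pos_of_ne hl (hψ p hp).1 (hψ p₁ hp₁).1 h₁).ne'
  set z := tau n x₀ p₁ • p₁ with hz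
  have hzz : mb n z z = 0 := by simp [hz, mb_smul_left, mb_smul_right, hp₁']
  have hφz : mb n (φ z) (φ z) = 0 := by simp [hf, mb_smul_left, mb_smul_right, hP₁]
  have hxz : 2 * mb n x₀ z = mb n x₀ x₀ := by
    simp only [mb_sub_left, mb_sub_right, hzz, mb_comm n z x₀] at hzn
    linarith
  let γ : ℝ → Fin n → ℝ := fun σ => x₀ + σ • (z - x₀)
  have hγ : Continuous γ := by fun_prop
  have hγq : ∀ σ, mb n (γ σ) (γ σ) = (1 - σ) * mb n x₀ x₀ := by
    intro σ
    simp only [γ, mb_sub_left, mb_sub_right, mb_add_left, mb_add_right, mb_smul_left,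
      mb_smul_right, hzz, mb_comm n z x₀]
    linear_combination (σ - σ ^ 2) * hxz
  have hγn : ∀ σ σ', mb n (γ σ - γ σ') (γ σ - γ σ') = 0 := by
    intro σ σ'
    have : γ σ - γ σ' = (σ' - σ) • (x₀ - z) := by
      simp only [γ]; module
    rw [this, mb_smul_left, mb_smul_right, hzn]; ring
  have hγ1 : γ 1 = z := by simp [γ]
  have key : Set.Icc (0 : ℝ) 1 ⊆ {σ | φ (γ σ) = φ x₀} := by
    apply IsClosed.Icc_subset_of_forall_mem_nhdsWithin
    · exact (isClosed_eq (by fun_prop) (by fun_prop)).inter isClosed_Icc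
    · simp [γ]
    · rintro σ ⟨hσ, hσ0, hσ1⟩
      apply mem_nhdsWithin_of_mem_nhds
      simp only [Set.mem_ofPred_eq] at hσ
      have hq : 0 < mb n (γ σ) (γ σ) := by
        rw [hγq]; exact mul_pos (by linarith) hx₀
      obtain ⟨c, hc0, hc⟩ := local_cone hl hcont hpres h0 hψ hp hp' hne heq hq (by rwa [hσ])
      have hX := hc.self_of_nhds
      filter_upwards [hγ.continuousAt.eventually hc] with σ' hY
      rw [← hσ]
      have n1 := hpres _ _ (hγn σ 1)
      have n2 := hpres _ _ (hγn σ' 1)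
      have n3 := hpres _ _ (hγn σ' σ)
      rw [hγ1] at n1 n2
      have hD0 : φ (γ σ) - φ z ≠ 0 := by
        intro h
        rw [sub_eq_zero] at h
        rw [hσ] at h
        exact hφ₀ (h ▸ hφz)
      have hort : mb n (φ (γ σ) - φ z) (φ (γ σ') - φ z) = 0 := by
        have e : φ (γ σ') - φ (γ σ) = (φ (γ σ') - φ z) - (φ (γ σ) - φ z) := by abel
        rw [e, mb_sub_left, mb_sub_right, mb_sub_right n _ _ (φ (γ σ) - φ z), n1, n2,
          mb_comm n (φ (γ σ') - φ z)] at n3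
        linarith
      obtain ⟨μ, hμ⟩ := exists_smul_of_null hl n1 n2 hort hD0
      set D := φ (γ σ) - φ z with hD
      have eX : φ (γ σ) = D + f • ψ p₁ := by rw [hD, hf]; abel
      have eY : φ (γ σ') = μ • D + f • ψ p₁ := by rw [← hμ, hf]; abel
      rw [eX] at hX
      rw [eY] at hY
      simp only [mb_sub_left, mb_sub_right, mb_add_left, mb_add_right, mb_smul_left,
        mb_smul_right, n1, hP, hP₁, mb_comm n (ψ p₁) D, mb_comm n (ψ p) D,
        mb_comm n (ψ p₁) (ψ p)] at hX hY
      -- the line through `φ z` and `φ (γ σ)` meets the cone of `c • ψ p` only once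
      have hm : (1 - μ) * (f * c * mb n (ψ p) (ψ p₁)) = 0 := by
        linear_combination (μ * hX - hY) / 2
      have hμ1 : μ = 1 := by
        rcases mul_eq_zero.1 hm with h | h
        · linarith
        · exact absurd h (by positivity)
      rw [eX, eY, hμ1, one_smul]
  have h1 := key (show (1 : ℝ) ∈ Set.Icc (0 : ℝ) 1 by simp)
  simp only [Set.mem_ofPred_eq, hγ1] at h1
  exact hφ₀ (h1 ▸ hφz)

/-! ### The case where all vectors with `q > 0` have null images -/

lemma same_sign_eq (hl : (l : ℕ) = n - 1) (hcont : Continuous φ)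
    (hpres : ∀ a b, mb n (b - a) (b - a) = 0 → mb n (φ b - φ a) (φ b - φ a) = 0)
    (h0 : φ 0 = 0) (hψ : IsInducedMap n φ 0 ψ) (hgen : interior (φ ⁻¹' {0}) = ∅)
    (htl : ∀ x, 0 < mb n x x → mb n (φ x) (φ x) = 0)
    {p p' : Fin n → ℝ} (hp : p ∈ QSet n) (hp' : p' ∈ QSet n) {t t' : ℝ} (htt : 0 < t * t')
    (hφt : φ (t • p) ≠ 0) (hφt' : φ (t' • p') ≠ 0) : ψ p = ψ p' := by
  by_cases hne : p = p'
  · rw [hne]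
  have hpp := mb_pos_of_ne hl hp hp' hne
  have hbp : mb n p p = 0 := ((mem_QSet_iff hl _).1 hp).2
  have hbp' : mb n p' p' = 0 := ((mem_QSet_iff hl _).1 hp').2
  have ht : t ≠ 0 := by rintro rfl; simp at htt
  have ht' : t' ≠ 0 := by rintro rfl; simp at htt
  set x₀ := t • p + t' • p' with hx₀
  have hq : mb n x₀ x₀ = 2 * (t * t') * mb n p p' := by
    simp only [hx₀, mb_add_left, mb_add_right, mb_smul_left, mb_smul_right, hbp, hbp',
      mb_comm n p' p]
    ring
  have hb1 : mb n x₀ p = t' * mb n p p' := by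
    simp only [hx₀, mb_add_left, mb_smul_left, hbp, mb_comm n p' p]; ring
  have hb2 : mb n x₀ p' = t * mb n p p' := by
    simp only [hx₀, mb_add_left, mb_smul_left, hbp']; ring
  have hq0 : 0 < mb n x₀ x₀ := by rw [hq]; positivity
  have hτ1 : tau n x₀ p = t := by
    rw [tau, hq, hb1]; field_simp
  have hτ2 : tau n x₀ p' = t' := by
    rw [tau, hq, hb2]; field_simp
  have o0 : IsOpen {x | φ x ≠ 0} := isOpen_ne_fun hcont continuous_const
  have o1 : IsOpen {x | 0 < mb n x x} := isOpen_lt (by fun_prop) (by fun_prop)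
  have c1 : ContinuousAt (fun x => tau n x p • p) x₀ :=
    (continuousAt_tau (mb_ne_zero_of_timelike hl hq0 hp)).smul continuousAt_const
  have c2 : ContinuousAt (fun x => tau n x p' • p') x₀ :=
    (continuousAt_tau (mb_ne_zero_of_timelike hl hq0 hp')).smul continuousAt_const
  have e1 := c1.eventually (o0.mem_nhds (by simpa [hτ1] using hφt))
  have e2 := c2.eventually (o0.mem_nhds (by simpa [hτ2] using hφt'))
  have e3 := o1.mem_nhds hq0
  have hfreq : ∃ᶠ x in nhds x₀, φ x ≠ 0 := by
    intro h
    have : x₀ ∈ interior (φ ⁻¹' {0}) := by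
      rw [mem_interior_iff_mem_nhds]
      filter_upwards [h] with x hx
      simpa using hx
    rw [hgen] at this
    exact this
  obtain ⟨x, hx, h1, h2, h3⟩ := (hfreq.and_eventually (e1.and (e2.and e3))).exists
  have hxn := htl x h3
  have aux : ∀ r ∈ QSet n, φ (tau n x r • r) ≠ 0 → ∃ μ : ℝ, ψ r = μ • φ x := by
    intro r hr hφr
    have hR := ((mem_QSet_iff hl _).1 (hψ r hr).1).2
    obtain ⟨s, hs⟩ := induced_zero h0 hψ hr (tau n x r)
    have hs0 : s ≠ 0 := by
      rintro rfl
      exact hφr (by simp [hs])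
    have h := hpres _ _ (tau_null hl hr (mb_ne_zero_of_timelike hl h3 hr))
    rw [hs] at h
    simp only [mb_sub_left, mb_sub_right, mb_smul_left, mb_smul_right, hxn, hR,
      mb_comm n (ψ r) (φ x)] at h
    have : s * mb n (φ x) (ψ r) = 0 := by linarith
    exact exists_smul_of_null hl hxn hR ((mul_eq_zero.1 this).resolve_left hs0) hx
  obtain ⟨μ, hμ⟩ := aux p hp h1
  obtain ⟨μ', hμ'⟩ := aux p' hp' h2
  by_contra hcon
  have := mb_pos_of_ne hl (hψ p hp).1 (hψ p' hp').1 hcon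
  rw [hμ, hμ', mb_smul_left, mb_smul_right, hxn] at this
  simp at this

/-- A vector `y` with `q(y) < 0` is orthogonal to some element of `𝒬`. -/
lemma exists_orthogonal (hn : 3 ≤ n) (hl : (l : ℕ) = n - 1) {y : Fin n → ℝ} (hy : mb n y y < 0) :
    ∃ r ∈ QSet n, mb n y r = 0 := by
  -- a nonzero `u` with vanishing last coordinate and orthogonal to `y`
  let L : (Fin n → ℝ) →ₗ[ℝ] (Fin 2 → ℝ) :=
    { toFun := fun u => ![u l, mb n u y]
      map_add' := fun u v => by
        ext i; fin_cases i <;> simp [mb_add_left]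
      map_smul' := fun c u => by
        ext i; fin_cases i <;> simp [mb_smul_left] }
  have hker : LinearMap.ker L ≠ ⊥ := LinearMap.ker_ne_bot_of_finrank_lt (by simp; omega)
  obtain ⟨u, hu, hu0⟩ := (Submodule.ne_bot_iff _).1 hker
  have hLu : ![u l, mb n u y] = 0 := hu
  have hul : u l = 0 := by simpa using congrFun hLu 0
  have huy : mb n u y = 0 := by simpa using congrFun hLu 1
  have huq : mb n u u < 0 :=
    lt_of_le_of_ne (mb_self_nonpos hl hul) fun h => hu0 (eq_zero_of_null hl hul h)
  let e : Fin n → ℝ := Pi.single l 1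
  have he : ∀ x, mb n e x = x l := by
    intro x
    unfold mb
    rw [Finset.sum_eq_single l]
    · simp [e, hl]
    · intro i _ hi
      simp [e, hi]
    · simp
  have hel : e l = 1 := by simp [e]
  have hyv : mb n y y - y l ^ 2 < 0 := by nlinarith [sq_nonneg (y l)]
  set Q := mb n y y - y l ^ 2 with hQ
  set β := Real.sqrt ((mb n y y / Q) / (-mb n u u)) with hβ
  have hβ2 : β ^ 2 = (mb n y y / Q) / (-mb n u u) :=
    Real.sq_sqrt (div_nonneg (div_nonneg_of_nonpos hy.le hyv.le) (by linarith))
  have hQ0 : Q ≠ 0 := hyv.ne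
  have hu1 : mb n u u ≠ 0 := huq.ne
  refine ⟨e + (-y l / Q) • (y - y l • e) + β • u, (mem_QSet_iff hl _).2 ⟨?_, ?_⟩, ?_⟩
  · simp [hel, hul]
  · simp only [mb_sub_left, mb_sub_right, mb_add_left, mb_add_right, mb_smul_left,
        mb_smul_right, mb_comm n y e, mb_comm n u e, mb_comm n y u, he, huy, hul, hel]
    have e1 : mb n y y = Q + y l ^ 2 := by rw [hQ]; ring
    have e2 : β * (β * mb n u u) = -(mb n y y / Q) := by
      rw [← mul_assoc, ← sq, hβ2]; field_simp
    ring_nf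
    ring_nf at e2
    rw [e2, e1]
    field_simp
    ring
  · simp only [mb_sub_right, mb_add_right,
        mb_smul_right, mb_comm n y e, mb_comm n y u, he, huy]
    have e1 : mb n y y = Q + y l ^ 2 := by rw [hQ]; ring
    rw [e1]
    field_simp
    ring

lemma constant_of_not_timelike (hn : 3 ≤ n) (hl : (l : ℕ) = n - 1) (hcont : Continuous φ)
    (hpres : ∀ a b, mb n (b - a) (b - a) = 0 → mb n (φ b - φ a) (φ b - φ a) = 0)
    (h0 : φ 0 = 0) (hψ : IsInducedMap n φ 0 ψ) (hgen : interior (φ ⁻¹' {0}) = ∅)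
    (htl : ∀ x, 0 < mb n x x → mb n (φ x) (φ x) = 0)
    {y : Fin n → ℝ} (hy : mb n (φ y) (φ y) ≠ 0) :
    ∃ P, ∀ p ∈ QSet n, ψ p = P := by
  have hyq : mb n y y < 0 := by
    rcases lt_trichotomy (mb n y y) 0 with h | h | h
    · exact h
    · exact absurd (by simpa [h0] using hpres 0 y (by simpa using h)) hy
    · exact absurd (htl y h) hy
  obtain ⟨r, hr, hyr⟩ := exists_orthogonal hn hl hyq
  refine ⟨ψ r, fun p hp => ?_⟩
  let e : Fin n → ℝ := Pi.single l 1
  have he : ∀ x, mb n e x = x l := by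
    intro x
    unfold mb
    rw [Finset.sum_eq_single l]
    · simp [e, hl]
    · intro i _ hi
      simp [e, hi]
    · simp
  have hpl := ((mem_QSet_iff hl _).1 hp).1
  have hrl := ((mem_QSet_iff hl _).1 hr).1
  -- the sign of the perturbation of `y` is that of `b(y, p)`
  obtain ⟨ε, hε, hεy⟩ : ∃ ε : ℝ, (ε = 1 ∨ ε = -1) ∧ 0 ≤ ε * mb n y p := by
    rcases le_total 0 (mb n y p) with h | h
    · exact ⟨1, Or.inl rfl, by linarith⟩
    · exact ⟨-1, Or.inr rfl, by linarith⟩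
  have hε2 : ε * ε = 1 := by rcases hε with rfl | rfl <;> norm_num
  have hc : Continuous fun δ : ℝ => y + (δ * ε) • e := by fun_prop
  have o1 : IsOpen {δ : ℝ | mb n (y + (δ * ε) • e) (y + (δ * ε) • e) < 0} :=
    isOpen_lt (by fun_prop) (by fun_prop)
  have o2 : IsOpen {δ : ℝ | mb n (φ (y + (δ * ε) • e)) (φ (y + (δ * ε) • e)) ≠ 0} :=
    isOpen_ne_fun (by fun_prop) (by fun_prop)
  have e1 := o1.mem_nhds (x := 0) (by simpa using hyq)
  have e2 := o2.mem_nhds (x := 0) (by simpa using hy)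
  have hev : ∀ᶠ δ in nhdsWithin (0 : ℝ) (Set.Ioi 0), δ ∈ Set.Ioi (0 : ℝ) ∧
      mb n (y + (δ * ε) • e) (y + (δ * ε) • e) < 0 ∧
      mb n (φ (y + (δ * ε) • e)) (φ (y + (δ * ε) • e)) ≠ 0 := by
    filter_upwards [self_mem_nhdsWithin, mem_nhdsWithin_of_mem_nhds e1,
      mem_nhdsWithin_of_mem_nhds e2] with δ h1 h2 h3
    exact ⟨h1, h2, h3⟩
  obtain ⟨δ, hδ, hq, hφ⟩ := hev.exists
  simp only [Set.mem_Ioi] at hδ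
  set y₁ := y + (δ * ε) • e with hy₁
  have b1 : mb n y₁ p = mb n y p + δ * ε := by
    rw [hy₁, mb_add_left, mb_smul_left, he, hpl]; ring
  have b2 : mb n y₁ r = δ * ε := by
    rw [hy₁, mb_add_left, mb_smul_left, he, hrl, hyr]; ring
  have hprod : 0 < mb n y₁ p * mb n y₁ r := by
    have : mb n y₁ p * mb n y₁ r = δ * (ε * mb n y p) + δ ^ 2 * (ε * ε) := by
      rw [b1, b2]; ring
    rw [this, hε2]
    positivity
  have hb1 : mb n y₁ p ≠ 0 := left_ne_zero_of_mul hprod.ne'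
  have hb2 : mb n y₁ r ≠ 0 := right_ne_zero_of_mul hprod.ne'
  have aux : ∀ s ∈ QSet n, mb n y₁ s ≠ 0 → φ (tau n y₁ s • s) ≠ 0 := by
    intro s hs hs0 h
    have := hpres _ _ (tau_null hl hs hs0)
    rw [h, sub_zero] at this
    exact hφ this
  refine same_sign_eq hl hcont hpres h0 hψ hgen htl hp hr ?_ (aux p hp hb1) (aux r hr hb2)
  have : tau n y₁ p * tau n y₁ r = mb n y₁ y₁ ^ 2 / (4 * (mb n y₁ p * mb n y₁ r)) := by
    unfold tau; field_simp; norm_num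
  rw [this]
  have := hq.ne
  positivity

end

theorem generic_nondegenerate_preserver_induced_map_injective
    (n : ℕ) (hn : 4 ≤ n) (φ : (Fin n → ℝ) → (Fin n → ℝ))
    (hcont : Continuous φ)
    (hpres : ∀ a b : Fin n → ℝ, mq n (b - a) = 0 → mq n (φ b - φ a) = 0)
    (hnd : ¬ ∃ s' : Fin n → ℝ, ∀ x : Fin n → ℝ, mq n (φ x - s') = 0)
    (h0 : φ 0 = 0)
    (hnc : ∃ ψ : (Fin n → ℝ) → (Fin n → ℝ), IsInducedMap n φ 0 ψ ∧
       ∃ p ∈ QSet n, ∃ p' ∈ QSet n, ψ p ≠ ψ p')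
    (hgen : interior (φ ⁻¹' {0}) = ∅) :
    ∀ ψ : (Fin n → ℝ) → (Fin n → ℝ), IsInducedMap n φ 0 ψ →
      ∀ p ∈ QSet n, ∀ p' ∈ QSet n, p ≠ p' → ψ p ≠ ψ p' := by
  obtain ⟨l, hl⟩ : ∃ l : Fin n, (l : ℕ) = n - 1 := ⟨⟨n - 1, by omega⟩, rfl⟩
  simp only [mq_eq] at hpres hnd
  obtain ⟨ψ₀, hψ₀, a, ha, a', ha', haa⟩ := hnc
  intro ψ hψ p hp p' hp' hne
  by_cases htl : ∀ x, 0 < mb n x x → mb n (φ x) (φ x) = 0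
  · exfalso
    obtain ⟨y, hy⟩ : ∃ y, mb n (φ y) (φ y) ≠ 0 := by
      by_contra! h
      exact hnd ⟨0, by simpa using h⟩
    obtain ⟨P, hP⟩ := constant_of_not_timelike (by omega) hl hcont hpres h0 hψ₀ hgen htl hy
    exact haa ((hP a ha).trans (hP a' ha').symm)
  · push Not at htl
    obtain ⟨x₀, hx₀, hφ₀⟩ := htl
    -- no line through `0` collapses, so the two induced maps coincide
    have huniq : ∀ r ∈ QSet n, ψ r = ψ₀ r := by
      intro r hr
      obtain ⟨c, hc0, hc, -⟩ := exists_coeff hl hpres h0 hψ hr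
        (mb_ne_zero_of_timelike hl hx₀ hr) hφ₀
      obtain ⟨d, -, hd, -⟩ := exists_coeff hl hpres h0 hψ₀ hr
        (mb_ne_zero_of_timelike hl hx₀ hr) hφ₀
      rw [hc] at hd
      have hcd : c = d := by
        have := congrFun hd l
        simpa [((mem_QSet_iff hl _).1 (hψ r hr).1).1,
          ((mem_QSet_iff hl _).1 (hψ₀ r hr).1).1] using this
      rw [← hcd] at hd
      exact smul_right_injective _ hc0 hd
    obtain ⟨p₁, hp₁, h₁⟩ : ∃ p₁ ∈ QSet n, ψ p ≠ ψ p₁ := by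
      by_contra! h
      apply haa
      rw [← huniq a ha, ← huniq a' ha', ← h a ha, ← h a' ha']
    exact injective_of_timelike hl hcont hpres h0 hψ hx₀ hφ₀ hp hp' hp₁ hne h₁
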